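/- (Gronwall lemma in the plane.) Let S, T > 0, A, B ≥ 0, and let f : [0,S] × [0,T] → [0,∞) be continuous and satisfy f(s,t) ≤ A + B·∫₀^s ∫₀^t f(u,v) dv du for all (s,t) ∈ [0,S] × [0,T]. Then f(s,t) ≤ A·h₀(B·s·t) for all (s,t) ∈ [0,S] × [0,T]. -/

import Mathlib

/-- The entire function `h₀(x) = ∑_{n≥0} xⁿ/(n!)²`. -/
noncomputable def h₀ (x : ℝ) : ℝ := ∑' n : ℕ, x ^ n / (n.factorial : ℝ) ^ 2

open MeasureTheory Set Filter Topology

theorem intervalIntegral_intervalIntegral_mono {g q : ℝ × ℝ → ℝ} (hg : Continuous g)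
    (hq : Continuous q) {s t : ℝ} (hs : 0 ≤ s) (ht : 0 ≤ t)
    (h : ∀ u ∈ Icc 0 s, ∀ v ∈ Icc 0 t, g (u, v) ≤ q (u, v)) :
    ∫ u in (0:ℝ)..s, ∫ v in (0:ℝ)..t, g (u, v) ≤
      ∫ u in (0:ℝ)..s, ∫ v in (0:ℝ)..t, q (u, v) := by
  have hcont {r : ℝ × ℝ → ℝ} (hr : Continuous r) :
      Continuous fun u ↦ ∫ v in (0:ℝ)..t, r (u, v) :=
    intervalIntegral.continuous_parametric_intervalIntegral_of_continuous' (by fun_prop) 0 t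
  refine intervalIntegral.integral_mono_on hs ((hcont hg).intervalIntegrable _ _)
    ((hcont hq).intervalIntegrable _ _) fun u hu ↦ ?_
  exact intervalIntegral.integral_mono_on ht (Continuous.intervalIntegrable (by fun_prop) _ _)
    (Continuous.intervalIntegrable (by fun_prop) _ _) fun v hv ↦ h u hu v hv

theorem intervalIntegral_intervalIntegral_sum_mul_pow (m : ℕ) (c : ℕ → ℝ) (s t : ℝ) :
    ∫ u in (0:ℝ)..s, ∫ v in (0:ℝ)..t,
        ∑ k ∈ Finset.range m, c k * (u * v) ^ k / (k.factorial : ℝ) ^ 2 =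
      ∑ k ∈ Finset.range m, c k * (s * t) ^ (k + 1) / ((k + 1).factorial : ℝ) ^ 2 := by
  have hinner (u : ℝ) : ∫ v in (0:ℝ)..t,
      ∑ k ∈ Finset.range m, c k * (u * v) ^ k / (k.factorial : ℝ) ^ 2 =
      ∑ k ∈ Finset.range m,
        c k / (k.factorial : ℝ) ^ 2 * (t ^ (k + 1) / (k + 1)) * u ^ k := by
    rw [intervalIntegral.integral_finsetSum
      fun k _ ↦ Continuous.intervalIntegrable (by fun_prop) _ _]
    refine Finset.sum_congr rfl fun k _ ↦ ?_
    have (v : ℝ) : c k * (u * v) ^ k / (k.factorial : ℝ) ^ 2 =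
        c k / (k.factorial : ℝ) ^ 2 * u ^ k * v ^ k := by ring
    simp only [this, intervalIntegral.integral_const_mul, integral_pow]
    simp
    ring
  simp only [hinner]
  rw [intervalIntegral.integral_finsetSum
    fun k _ ↦ Continuous.intervalIntegrable (by fun_prop) _ _]
  refine Finset.sum_congr rfl fun k _ ↦ ?_
  simp only [intervalIntegral.integral_const_mul, integral_pow, Nat.factorial_succ]
  have : (k.factorial : ℝ) ≠ 0 := by positivity
  have : (k : ℝ) + 1 ≠ 0 := by positivity
  push_cast
  field_simp
  simp [mul_pow, mul_assoc, mul_comm (t ^ (k + 1))]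

theorem summable_pow_div_factorial_sq (x : ℝ) :
    Summable fun n : ℕ ↦ x ^ n / (n.factorial : ℝ) ^ 2 := by
  refine Summable.of_norm_bounded (Real.summable_pow_div_factorial |x|) fun n ↦ ?_
  have h : (1 : ℝ) ≤ n.factorial := by exact_mod_cast n.factorial_pos
  rw [Real.norm_eq_abs, abs_div, abs_pow, abs_of_nonneg (by positivity : (0:ℝ) ≤ _ ^ 2)]
  gcongr
  nlinarith

/-- Bound obtained by iterating the planar Gronwall inequality `n` times from `g ≤ M`. -/
theorem le_sum_of_le_add_mul_integral {S T A B M : ℝ} (hB : 0 ≤ B) {g : ℝ × ℝ → ℝ}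
    (hg : Continuous g) (hM : ∀ s ∈ Icc 0 S, ∀ t ∈ Icc 0 T, g (s, t) ≤ M)
    (h : ∀ s ∈ Icc 0 S, ∀ t ∈ Icc 0 T,
      g (s, t) ≤ A + B * ∫ u in (0:ℝ)..s, ∫ v in (0:ℝ)..t, g (u, v)) (n : ℕ) :
    ∀ s ∈ Icc 0 S, ∀ t ∈ Icc 0 T, g (s, t) ≤
      ∑ k ∈ Finset.range (n + 1),
        (if k < n then A else M) * B ^ k * (s * t) ^ k / (k.factorial : ℝ) ^ 2 := by
  induction n with
  | zero => simpa using hM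
  | succ n ih =>
    intro s hs t ht
    have key := intervalIntegral_intervalIntegral_mono (s := s) (t := t) hg
      (q := fun p ↦ ∑ k ∈ Finset.range (n + 1),
        (if k < n then A else M) * B ^ k * (p.1 * p.2) ^ k / (k.factorial : ℝ) ^ 2)
      (by fun_prop) hs.1 ht.1
      fun u hu v hv ↦ ih u ⟨hu.1, hu.2.trans hs.2⟩ v ⟨hv.1, hv.2.trans ht.2⟩
    rw [intervalIntegral_intervalIntegral_sum_mul_pow (n + 1)
      (fun k ↦ (if k < n then A else M) * B ^ k)] at key
    refine (h s hs t ht).trans ((add_le_add_right (mul_le_mul_of_nonneg_left key hB) A).trans_eq ?_)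
    rw [Finset.sum_range_succ' _ (n + 1), Finset.mul_sum, add_comm]
    congr 1
    · refine Finset.sum_congr rfl fun k _ ↦ ?_
      simp only [Nat.add_lt_add_iff_right]
      ring
    · simp

theorem le_mul_h₀_of_le_add_mul_integral {S T A B M : ℝ} (hB : 0 ≤ B) {g : ℝ × ℝ → ℝ}
    (hg : Continuous g) (hM : ∀ s ∈ Icc 0 S, ∀ t ∈ Icc 0 T, g (s, t) ≤ M)
    (h : ∀ s ∈ Icc 0 S, ∀ t ∈ Icc 0 T,
      g (s, t) ≤ A + B * ∫ u in (0:ℝ)..s, ∫ v in (0:ℝ)..t, g (u, v))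
    {s t : ℝ} (hs : s ∈ Icc 0 S) (ht : t ∈ Icc 0 T) : g (s, t) ≤ A * h₀ (B * s * t) := by
  have hsum := summable_pow_div_factorial_sq (B * s * t)
  have hlim := (hsum.hasSum.tendsto_sum_nat.const_mul A).add
    (hsum.tendsto_atTop_zero.const_mul M)
  rw [mul_zero, add_zero] at hlim
  refine ge_of_tendsto' hlim fun n ↦
    (le_sum_of_le_add_mul_integral hB hg hM h n s hs t ht).trans_eq ?_
  rw [Finset.sum_range_succ, Finset.mul_sum]
  congr 1
  · refine Finset.sum_congr rfl fun k hk ↦ ?_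
    rw [if_pos (Finset.mem_range.1 hk)]
    ring
  · rw [if_neg (lt_irrefl n)]
    ring

/-- Gronwall lemma in the plane: if `f : [0,S] × [0,T] → [0,∞)` is continuous and
`f(s,t) ≤ A + B·∫₀^s∫₀^t f(u,v) dv du` on `[0,S] × [0,T]` with `A, B ≥ 0`, then
`f(s,t) ≤ A·h₀(B·s·t)` on `[0,S] × [0,T]`. -/
theorem stmt_14 (S T A B : ℝ) (hS : 0 < S) (hT : 0 < T) (hA : 0 ≤ A) (hB : 0 ≤ B)
    (f : ℝ × ℝ → ℝ) (hf : ContinuousOn f (Set.Icc 0 S ×ˢ Set.Icc 0 T))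
    (hnonneg : ∀ s t : ℝ, s ∈ Set.Icc 0 S → t ∈ Set.Icc 0 T → 0 ≤ f (s, t))
    (hineq : ∀ s t : ℝ, s ∈ Set.Icc 0 S → t ∈ Set.Icc 0 T →
      f (s, t) ≤ A + B * ∫ u in (0:ℝ)..s, ∫ v in (0:ℝ)..t, f (u, v)) :
    ∀ s t : ℝ, s ∈ Set.Icc 0 S → t ∈ Set.Icc 0 T → f (s, t) ≤ A * h₀ (B * s * t) := by
  intro s t hs ht
  obtain ⟨M, hM⟩ := (isCompact_Icc.prod isCompact_Icc).bddAbove_image hf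
  let g : ℝ × ℝ → ℝ := fun p ↦ f (projIcc 0 S hS.le p.1, projIcc 0 T hT.le p.2)
  have hg : Continuous g := hf.comp_continuous
    (((continuous_subtype_val.comp continuous_projIcc).comp continuous_fst).prodMk
      ((continuous_subtype_val.comp continuous_projIcc).comp continuous_snd))
    fun p ↦ ⟨Subtype.coe_prop _, Subtype.coe_prop _⟩
  have hgf : ∀ u ∈ Icc 0 S, ∀ v ∈ Icc 0 T, g (u, v) = f (u, v) := fun u hu v hv ↦ by
    simp [g, projIcc_of_mem _ hu, projIcc_of_mem _ hv]
  rw [← hgf s hs t ht]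
  refine le_mul_h₀_of_le_add_mul_integral (M := M) hB hg (fun u hu v hv ↦ ?_)
    (fun u hu v hv ↦ ?_) hs ht
  · rw [hgf u hu v hv]
    exact hM (mem_image_of_mem f ⟨hu, hv⟩)
  · rw [hgf u hu v hv]
    refine (hineq u v hu hv).trans_eq ?_
    congr 2
    refine intervalIntegral.integral_congr fun x hx ↦ intervalIntegral.integral_congr fun y hy ↦ ?_
    rw [uIcc_of_le hu.1] at hx
    rw [uIcc_of_le hv.1] at hy
    exact (hgf x ⟨hx.1, hx.2.trans hu.2⟩ y ⟨hy.1, hy.2.trans hv.2⟩).symm
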